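/- Let (𝔩,𝔪) be a permissible pair with the algorithm notations in place. Then: (a) whenever i ∈ I and i^∨ ∈ I, one has i ≤ (i^∨)_# < i^∨ and e(Δ_i) = e(Δ_{(i^∨)_#}); (b) whenever i, i_#, (i_#)^∨ all lie in I, one has i_# < i ≤ (i_#)^∨ and either e(Δ_{(i_#)^∨}) = e(Δ_i) < e(Δ_{i_#}) or e(Δ_{(i_#)^∨}) < e(Δ_i) = e(Δ_{i_#}). -/

import Mathlib

/-!
Every cycle of `σ` is a fibre `i₁ > … > i_s, j_t` of the depth function, and end points grow weakly
along it: `e(i₁) ≤ … ≤ e(i_s) ≤ e(j_t)`. The inequalities inside `I` hold because `≪` strictly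
lowers depth (`depth_lt_of_ll`), so two segments in a common fibre are never `≪`-related
(`end_le_of_lt`); the last one holds because `𝔡 ≤ 𝔡'` and `𝔩` is a ladder (`end_le_ladder`).

Consequently, if the end point does not change at `j_t`, it is constant on the whole fibre
(`end_eq_of_not_breaksEnd`) and `x^∨` is `j_t`. Hence when `i^∨ ∈ I`, the walk
`i, σ⁻¹ i, σ⁻² i, …` reaching it never passes through `J`: indices strictly increase along it, and
end points stay constant until they strictly drop at the last step (`walk`). Part (a) is this
statement for `i`. Part (b) is either a walk of length one from `i_#`, or such a walk from `i`.
-/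

/-- A *segment* `Δ(a,b)`: a pair of integers `a ≤ b`.  `b` is the begin point
and `e` the end point. -/
structure Segment where
  b : ℤ
  e : ℤ
  le : b ≤ e

namespace Segment

/-- `Δ₁ ≪ Δ₂` : `b(Δ₁) < b(Δ₂)` and `e(Δ₁) < e(Δ₂)`. -/
def ll (Δ₁ Δ₂ : Segment) : Prop := Δ₁.b < Δ₂.b ∧ Δ₁.e < Δ₂.e

/-- `Δ₁ ≺ Δ₂` : `b(Δ₁) < b(Δ₂)`, `e(Δ₁) < e(Δ₂)` and `e(Δ₁) ≥ b(Δ₂) - 1`. -/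
def prec (Δ₁ Δ₂ : Segment) : Prop := Δ₁.b < Δ₂.b ∧ Δ₁.e < Δ₂.e ∧ Δ₂.b - 1 ≤ Δ₁.e

/-- `⁻Δ = Δ(a-1, b-1)`. -/
def shiftDown (Δ : Segment) : Segment := ⟨Δ.b - 1, Δ.e - 1, by have := Δ.le; omega⟩

end Segment

/-- The standing data of the inverse Knuth–Viennot algorithm: a nonzero multisegment
`𝔪 = Σ_{i ∈ I} Δ_i` indexed by `I = Fin n` (linearly ordered compatibly with begin
points, ties broken by reversed end points), and a ladder multisegment
`𝔩 = Σ_{t ∈ J} Δ_{j_t}` indexed by `J = Fin l` (`jseg t` is the segment `Δ_{j_{t+1}}`,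
enumerated so that `Δ_{j_l} ≪ ⋯ ≪ Δ_{j_1}`), such that the pair `(𝔩, 𝔪)` is
permissible. -/
structure KVData where
  n : ℕ
  l : ℕ
  npos : 0 < n
  lpos : 0 < l
  iseg : Fin n → Segment
  jseg : Fin l → Segment
  iOrder : ∀ i₁ i₂ : Fin n, i₂ < i₁ →
    (iseg i₂).b < (iseg i₁).b ∨ ((iseg i₂).b = (iseg i₁).b ∧ (iseg i₁).e ≤ (iseg i₂).e)
  ladder : ∀ t t' : Fin l, t < t' → Segment.ll (jseg t') (jseg t)
  permissible : ∀ (m : ℕ) (c : Fin m → Fin n),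
    (∀ r s : Fin m, r < s → Segment.ll (iseg (c s)) (iseg (c r))) →
    ∃ φ : Fin m → Fin l, StrictMono φ ∧
      ∀ t : Fin m, Segment.prec (Segment.shiftDown (iseg (c t))) (jseg (φ t))

namespace KVData

variable (D : KVData)

/-- The segment attached to an index in `I ⊔ J`. -/
def segOf : Fin D.n ⊕ Fin D.l → Segment := Sum.elim D.iseg D.jseg

/-- The set `{t : ⁻Δ_i ≪ Δ_{j_t}}` (0-based positions in the ladder `𝔩`). -/
def dPrimeSet (i : Fin D.n) : Set ℕ :=
  {t : ℕ | ∃ h : t < D.l, Segment.ll (Segment.shiftDown (D.iseg i)) (D.jseg ⟨t, h⟩)}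

/-- The set `{𝔡'(i_k) - k : i = i_0, Δ_{i_{r+1}} ≪ Δ_{i_r}}` whose minimum is `𝔡(i)`. -/
def depthSet (d' : Fin D.n → ℕ) (i : Fin D.n) : Set ℤ :=
  {z : ℤ | ∃ (k : ℕ) (c : ℕ → Fin D.n), c 0 = i ∧
    (∀ r < k, Segment.ll (D.iseg (c (r + 1))) (D.iseg (c r))) ∧
    z = (d' (c k) : ℤ) - (k : ℤ)}

/-- `d'` is the function `𝔡'` and `d` the depth function `𝔡` on `I ⊔ J`
(`𝔡'(i) = max{t : ⁻Δ_i ≪ Δ_{j_t}}`, `𝔡(i) = min{𝔡'(i_k) - k}`, `𝔡(j_t) = t`). -/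
def DepthSpec (d' : Fin D.n → ℕ) (d : Fin D.n ⊕ Fin D.l → ℤ) : Prop :=
  (∀ i, IsGreatest (D.dPrimeSet i) (d' i)) ∧
  (∀ i, IsLeast (D.depthSet d' i) (d (Sum.inl i))) ∧
  (∀ t : Fin D.l, d (Sum.inr t) = (t : ℤ))

/-- `σ` is the permutation of `I ⊔ J` whose disjoint cycles are `(i_1, …, i_s, j_t)`
where `{i_1 > … > i_s} ∪ {j_t} = 𝔡⁻¹(t)`:  an element `i ∈ I` is sent to the largest
element of `I` below it in its fiber of `𝔡`, or to the `J`-element of the fiber if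
there is none; the `J`-element of a fiber is sent to the largest `I`-element of the
fiber, or to itself if there is none. -/
def SigmaSpec (d : Fin D.n ⊕ Fin D.l → ℤ) (σ : Equiv.Perm (Fin D.n ⊕ Fin D.l)) : Prop :=
  (∀ i : Fin D.n,
    (∃ i' : Fin D.n,
        IsGreatest {i'' : Fin D.n | i'' < i ∧ d (Sum.inl i'') = d (Sum.inl i)} i' ∧
        σ (Sum.inl i) = Sum.inl i')
    ∨ ((¬ ∃ i'' : Fin D.n, i'' < i ∧ d (Sum.inl i'') = d (Sum.inl i)) ∧
        ∃ t : Fin D.l, (t : ℤ) = d (Sum.inl i) ∧ σ (Sum.inl i) = Sum.inr t)) ∧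
  (∀ t : Fin D.l,
    (∃ i : Fin D.n,
        IsGreatest {i' : Fin D.n | d (Sum.inl i') = (t : ℤ)} i ∧
        σ (Sum.inr t) = Sum.inl i)
    ∨ ((¬ ∃ i : Fin D.n, d (Sum.inl i) = (t : ℤ)) ∧ σ (Sum.inr t) = Sum.inr t))

/-- `e(Δ♣_x) ≠ e(Δ_x)`, i.e. the end point changes at `x`
(recall `Δ♣_x = Δ(b(Δ_x), e(Δ_{σ(x)}))`). -/
def breaksEnd (σ : Equiv.Perm (Fin D.n ⊕ Fin D.l)) (x : Fin D.n ⊕ Fin D.l) : Prop :=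
  (D.segOf (σ x)).e ≠ (D.segOf x).e

/-- `vee` is the map `x ↦ x^∨`:  `x^∨ = σ^{-r}(x)` for the least `r ≥ 1` such that
`e(Δ♣_{σ^{-r}(x)}) ≠ e(Δ_{σ^{-r}(x)})`, and `x^∨ = j_{𝔡(x)}` if no such `r` exists. -/
def VeeSpec (d : Fin D.n ⊕ Fin D.l → ℤ) (σ : Equiv.Perm (Fin D.n ⊕ Fin D.l))
    (vee : Fin D.n ⊕ Fin D.l → Fin D.n ⊕ Fin D.l) : Prop :=
  ∀ x : Fin D.n ⊕ Fin D.l,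
    ((∃ r : ℕ, 1 ≤ r ∧ D.breaksEnd σ ((⇑σ.symm)^[r] x)) →
      ∃ r : ℕ, 1 ≤ r ∧ vee x = (⇑σ.symm)^[r] x ∧ D.breaksEnd σ ((⇑σ.symm)^[r] x) ∧
        ∀ r' : ℕ, 1 ≤ r' → r' < r → ¬ D.breaksEnd σ ((⇑σ.symm)^[r'] x)) ∧
    ((¬ ∃ r : ℕ, 1 ≤ r ∧ D.breaksEnd σ ((⇑σ.symm)^[r] x)) →
      ∃ t : Fin D.l, (t : ℤ) = d x ∧ vee x = Sum.inr t)

/-- The multisegment `𝔪` of the data. -/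
def mSeg : Multiset Segment := Multiset.map D.iseg Finset.univ.val

/-- The ladder multisegment `𝔩` of the data. -/
def lSeg : Multiset Segment := Multiset.map D.jseg Finset.univ.val

end KVData

namespace KVData

variable {D : KVData} {d' : Fin D.n → ℕ} {d : Fin D.n ⊕ Fin D.l → ℤ}
  {σ : Equiv.Perm (Fin D.n ⊕ Fin D.l)}

lemma depth_lt_of_ll (hdep : D.DepthSpec d' d) {i i' : Fin D.n}
    (h : Segment.ll (D.iseg i') (D.iseg i)) : d (Sum.inl i) < d (Sum.inl i') := by
  have hmin := hdep.2.1 i'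
  obtain ⟨k, c, hc0, hc, hz⟩ := hmin.1
  -- Prepend `i` to a chain realizing the depth of `i'`.
  have hmem : (d' (c k) : ℤ) - ((k + 1 : ℕ) : ℤ) ∈ D.depthSet d' i := by
    refine ⟨k + 1, fun r => Nat.casesOn r i c, rfl, ?_, rfl⟩
    intro r hr
    cases r with
    | zero => simpa [hc0] using h
    | succ r => exact hc r (by omega)
  have := (hdep.2.1 i).2 hmem
  push_cast at this
  omega

lemma end_le_of_lt (hdep : D.DepthSpec d' d) {i i' : Fin D.n} (hlt : i' < i)
    (hd : d (Sum.inl i') = d (Sum.inl i)) : (D.iseg i).e ≤ (D.iseg i').e := by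
  rcases D.iOrder i i' hlt with hb | ⟨-, he⟩
  · by_contra hcon
    have := depth_lt_of_ll hdep (i := i) (i' := i') ⟨hb, by omega⟩
    omega
  · exact he

lemma end_le_ladder (hdep : D.DepthSpec d' d) {i : Fin D.n} {t : Fin D.l}
    (hd : d (Sum.inl i) = t) : (D.iseg i).e ≤ (D.jseg t).e := by
  have hle : d (Sum.inl i) ≤ (d' i : ℤ) - ((0 : ℕ) : ℤ) :=
    (hdep.2.1 i).2 ⟨0, fun _ => i, rfl, by simp, rfl⟩
  obtain ⟨h, -, he⟩ := (hdep.1 i).1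
  have h1 : (D.jseg ⟨d' i, h⟩).e ≤ (D.jseg t).e := by
    rcases (show t ≤ ⟨d' i, h⟩ from by rw [Fin.le_def]; simp only; omega).eq_or_lt with h2 | h2
    · rw [← h2]
    · exact (D.ladder _ _ h2).2.le
  simp only [Segment.shiftDown] at he
  omega

lemma depth_sigma (hdep : D.DepthSpec d' d) (hσ : D.SigmaSpec d σ) (x : Fin D.n ⊕ Fin D.l) :
    d (σ x) = d x := by
  rcases x with i | t
  · rcases hσ.1 i with ⟨i', hi', h⟩ | ⟨-, t, ht, h⟩
    · rw [h]; exact hi'.1.2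
    · rw [h, hdep.2.2, ht]
  · rcases hσ.2 t with ⟨i, hi, h⟩ | ⟨-, h⟩
    · rw [h, hdep.2.2]; exact hi.1
    · rw [h]

lemma depth_symm_iterate (hdep : D.DepthSpec d' d) (hσ : D.SigmaSpec d σ) (r : ℕ)
    (x : Fin D.n ⊕ Fin D.l) : d ((⇑σ.symm)^[r] x) = d x := by
  induction r with
  | zero => rfl
  | succ r ih =>
    rw [Function.iterate_succ_apply', ← depth_sigma hdep hσ (σ.symm _), Equiv.apply_symm_apply, ih]

lemma sigma_lt (hdep : D.DepthSpec d' d) (hσ : D.SigmaSpec d σ) {i i' : Fin D.n}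
    (h : σ (Sum.inl i) = Sum.inl i') : i' < i ∧ (D.iseg i).e ≤ (D.iseg i').e := by
  rcases hσ.1 i with ⟨y, hy, h'⟩ | ⟨-, t, -, h'⟩
  · obtain rfl : i' = y := Sum.inl_injective (h.symm.trans h')
    exact ⟨hy.1.1, end_le_of_lt hdep hy.1.1 hy.1.2⟩
  · exact absurd (h.symm.trans h') (by simp)

/-- `σ(j_t)` has the smallest end point of its fibre and `j_t` the largest, so their equality
makes the end point constant on the fibre. -/
lemma end_eq_of_not_breaksEnd (hdep : D.DepthSpec d' d) (hσ : D.SigmaSpec d σ) {t : Fin D.l}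
    (hb : ¬ D.breaksEnd σ (Sum.inr t)) {x : Fin D.n ⊕ Fin D.l} (hx : d x = t) :
    (D.segOf x).e = (D.jseg t).e := by
  rcases x with i | s
  · rcases hσ.2 t with ⟨m, hm, h⟩ | ⟨h, -⟩
    · have hbe : (D.iseg m).e = (D.jseg t).e := by
        simpa [breaksEnd, h, segOf] using hb
      have h1 := end_le_ladder hdep hx
      have h2 : (D.iseg m).e ≤ (D.iseg i).e := by
        rcases (hm.2 hx).eq_or_lt with h3 | h3
        · rw [h3]
        · exact end_le_of_lt hdep h3 (hx.trans (Eq.symm hm.1))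
      change (D.iseg i).e = _
      omega
    · exact absurd ⟨i, hx⟩ h
  · rw [hdep.2.2] at hx
    obtain rfl : s = t := Fin.ext (by exact_mod_cast hx)
    rfl

/-- A walk along `σ⁻¹` from `i ∈ I` to `i' ∈ I`, where the end point changes at `i'` and at no
intermediate vertex, stays in `I`. -/
lemma walk (hdep : D.DepthSpec d' d) (hσ : D.SigmaSpec d σ) (r : ℕ) (i i' : Fin D.n)
    (hr : (⇑σ.symm)^[r + 1] (Sum.inl i) = Sum.inl i')
    (hb : D.breaksEnd σ (Sum.inl i'))
    (hmin : ∀ r' : ℕ, 1 ≤ r' → r' < r + 1 → ¬ D.breaksEnd σ ((⇑σ.symm)^[r'] (Sum.inl i))) :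
    ∃ x : Fin D.n, σ (Sum.inl i') = Sum.inl x ∧ i ≤ x ∧ x < i' ∧
      (D.iseg i).e = (D.iseg x).e ∧ (D.iseg i').e < (D.iseg i).e := by
  induction r generalizing i with
  | zero =>
    have hs : σ (Sum.inl i') = Sum.inl i := by
      rw [← hr]; simp
    have h1 := sigma_lt hdep hσ hs
    have hne : (D.iseg i).e ≠ (D.iseg i').e := by
      simpa [breaksEnd, hs, segOf] using hb
    exact ⟨i, hs, le_rfl, h1.1, rfl, by omega⟩
  | succ r ih =>
    have hb1 := hmin 1 le_rfl (by omega)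
    rw [Function.iterate_one] at hb1
    rcases hy : σ.symm (Sum.inl i) with y | t
    · have hs : σ (Sum.inl y) = Sum.inl i := by rw [← hy]; simp
      rw [hy] at hb1
      have he : (D.iseg i).e = (D.iseg y).e := by
        simpa [breaksEnd, hs, segOf] using hb1
      obtain ⟨x, hx, hyx, hxi, hex, hlt⟩ := ih y
        (by rw [← hr, Function.iterate_succ_apply _ (r + 1), hy])
        (by
          intro r' h1 h2
          have := hmin (r' + 1) (by omega) (by omega)
          rwa [Function.iterate_succ_apply, hy] at this)
      exact ⟨x, hx, (sigma_lt hdep hσ hs).1.le.trans hyx, hxi, he.trans hex, he ▸ hlt⟩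
    · -- The end point would be constant on the fibre of `i'`, so it could not change at `i'`.
      rw [hy] at hb1
      have hdi : d (Sum.inl i') = t := by
        rw [← hr, depth_symm_iterate hdep hσ, ← hdep.2.2 t, ← hy]
        exact (depth_symm_iterate hdep hσ 1 _).symm
      refine absurd ?_ hb
      rw [end_eq_of_not_breaksEnd hdep hσ hb1 hdi,
        end_eq_of_not_breaksEnd hdep hσ hb1 ((depth_sigma hdep hσ _).trans hdi)]

lemma vee_walk {vee : Fin D.n ⊕ Fin D.l → Fin D.n ⊕ Fin D.l} (hvee : D.VeeSpec d σ vee)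
    {i i' : Fin D.n} (h : vee (Sum.inl i) = Sum.inl i') :
    ∃ r : ℕ, (⇑σ.symm)^[r + 1] (Sum.inl i) = Sum.inl i' ∧ D.breaksEnd σ (Sum.inl i') ∧
      ∀ r' : ℕ, 1 ≤ r' → r' < r + 1 → ¬ D.breaksEnd σ ((⇑σ.symm)^[r'] (Sum.inl i)) := by
  by_cases hex : ∃ r : ℕ, 1 ≤ r ∧ D.breaksEnd σ ((⇑σ.symm)^[r] (Sum.inl i))
  · obtain ⟨r, hr1, hv, hb, hmin⟩ := (hvee (Sum.inl i)).1 hex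
    obtain ⟨r, rfl⟩ : ∃ k, r = k + 1 := ⟨r - 1, by omega⟩
    rw [← hv, h] at hb
    exact ⟨r, hv.symm.trans h, hb, hmin⟩
  · obtain ⟨t, -, ht⟩ := (hvee (Sum.inl i)).2 hex
    rw [h] at ht; cases ht

end KVData

/-- further properties of `K'`.  Let `(𝔩,𝔪)` be a permissible pair
with the algorithm notations in place.  Then: (a) whenever `i ∈ I` and `i^∨ ∈ I`, one
has `i ≤ (i^∨)_# < i^∨` (in particular `(i^∨)_# ∈ I`) and `e(Δ_i) = e(Δ_{(i^∨)_#})`;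
(b) whenever `i, i_#, (i_#)^∨` all lie in `I`, one has `i_# < i ≤ (i_#)^∨` and either
`e(Δ_{(i_#)^∨}) = e(Δ_i) < e(Δ_{i_#})` or `e(Δ_{(i_#)^∨}) < e(Δ_i) = e(Δ_{i_#})`. -/
theorem vee_sharp_order_properties (D : KVData) (d' : Fin D.n → ℕ)
    (d : Fin D.n ⊕ Fin D.l → ℤ) (σ : Equiv.Perm (Fin D.n ⊕ Fin D.l))
    (vee : Fin D.n ⊕ Fin D.l → Fin D.n ⊕ Fin D.l)
    (hdep : D.DepthSpec d' d) (hσ : D.SigmaSpec d σ) (hvee : D.VeeSpec d σ vee) :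
    (∀ i i' : Fin D.n, vee (Sum.inl i) = Sum.inl i' →
      ∃ i'' : Fin D.n, σ (Sum.inl i') = Sum.inl i'' ∧ i ≤ i'' ∧ i'' < i' ∧
        (D.iseg i).e = (D.iseg i'').e) ∧
    (∀ i i₂ i₃ : Fin D.n, σ (Sum.inl i) = Sum.inl i₂ → vee (Sum.inl i₂) = Sum.inl i₃ →
      i₂ < i ∧ i ≤ i₃ ∧
        (((D.iseg i₃).e = (D.iseg i).e ∧ (D.iseg i).e < (D.iseg i₂).e) ∨
         ((D.iseg i₃).e < (D.iseg i).e ∧ (D.iseg i).e = (D.iseg i₂).e))) := by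
  refine ⟨?_, ?_⟩
  · intro i i' h
    obtain ⟨r, hr, hb, hmin⟩ := KVData.vee_walk hvee h
    obtain ⟨x, hx, h1, h2, h3, -⟩ := KVData.walk hdep hσ r i i' hr hb hmin
    exact ⟨x, hx, h1, h2, h3⟩
  · intro i i₂ i₃ hs h
    obtain ⟨hlt, hle⟩ := KVData.sigma_lt hdep hσ hs
    obtain ⟨r, hr, hb, hmin⟩ := KVData.vee_walk hvee h
    have hy : σ.symm (Sum.inl i₂) = Sum.inl i := by rw [← hs]; simp
    rcases r with _ | r
    · have h3 : i = i₃ := Sum.inl_injective (hy.symm.trans hr)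
      subst h3
      have hne : (D.iseg i₂).e ≠ (D.iseg i).e := by
        simpa [KVData.breaksEnd, hs, KVData.segOf] using hb
      exact ⟨hlt, le_rfl, Or.inl ⟨rfl, by omega⟩⟩
    · have hb1 := hmin 1 le_rfl (by omega)
      rw [Function.iterate_one, hy] at hb1
      have he : (D.iseg i₂).e = (D.iseg i).e := by
        simpa [KVData.breaksEnd, hs, KVData.segOf] using hb1
      obtain ⟨x, -, h1, h2, -, h4⟩ := KVData.walk hdep hσ r i i₃
        (by rw [← hr, Function.iterate_succ_apply _ (r + 1), hy]) hb
        (by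
          intro r' h1 h2
          have := hmin (r' + 1) (by omega) (by omega)
          rwa [Function.iterate_succ_apply, hy] at this)
      exact ⟨hlt, h1.trans h2.le, Or.inr ⟨h4, he.symm⟩⟩
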